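/- Let R_θ denote the 2×2 counterclockwise rotation by angle θ, let Q_a = diag(R_{π/3}, R_{π/6}) be the 4×4 block diagonal orthogonal matrix, and let v = (1,1,1,1)ᵀ ∈ ℝ⁴. If m is an integer with 0 < m < 12 and there exist α, β ∈ ℝ such that α v = Σ_{j=0}^{m−1} Q_a^j v + β Q_a^m v, then m = 1 or m = 11. -/

import Mathlib

/-!
Identify each plane with `ℂ`: `R_θ` becomes multiplication by `e^{iθ}` and `(1,1)` becomes `1 + i`.
Dividing by `1 + i`, the hypothesis says that `∑_{j<m} e^{ijθ} + β e^{imθ} = α` for `θ = π/3` and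
`θ = π/6`. Its imaginary part eliminates `α` and leaves (`sum_sin_add_eq_zero`)
`∑_{j<m} sin (jθ) + β sin (mθ) = 0`. These are two linear equations in the single unknown `β`, with
coefficients in `ℚ(√3)`, and they are inconsistent for every `2 ≤ m ≤ 10`.
-/

open Matrix Finset
open scoped Real

/-- The 2×2 counterclockwise rotation by `θ`. -/
noncomputable def Rot (θ : ℝ) : Matrix (Fin 2) (Fin 2) ℝ :=
  !![Real.cos θ, -Real.sin θ; Real.sin θ, Real.cos θ]

/-- `Q_a = diag(R_{π/3}, R_{π/6})`. -/
noncomputable def QaGN : Matrix (Fin 2 ⊕ Fin 2) (Fin 2 ⊕ Fin 2) ℝ :=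
  Matrix.fromBlocks (Rot (π / 3)) 0 0 (Rot (π / 6))

theorem Rot_pow (θ : ℝ) (n : ℕ) : Rot θ ^ n = Rot (n * θ) := by
  induction n with
  | zero => simp [Rot, Matrix.one_fin_two]
  | succ k ih =>
    rw [pow_succ, ih]
    have e : ((k + 1 : ℕ) : ℝ) * θ = k * θ + θ := by push_cast; ring
    rw [e]
    ext i j
    fin_cases i <;> fin_cases j <;>
      simp [Rot, Matrix.mul_apply, Fin.sum_univ_two, Real.cos_add, Real.sin_add] <;> ring

theorem QaGN_pow (n : ℕ) :
    QaGN ^ n = Matrix.fromBlocks (Rot (n * (π / 3))) 0 0 (Rot (n * (π / 6))) := by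
  rw [QaGN, Matrix.fromBlocks_diagonal_pow, Rot_pow, Rot_pow]

/-- The imaginary part of `∑_{j<m} e^{ijθ} + β e^{imθ} = α`. The hypotheses are the two real
coordinates of that equation multiplied by `1 + i`. -/
theorem sum_sin_add_eq_zero {m : ℕ} {α β θ : ℝ}
    (h₀ : α = ∑ j ∈ range m, (Real.cos (j * θ) - Real.sin (j * θ))
      + β * (Real.cos (m * θ) - Real.sin (m * θ)))
    (h₁ : α = ∑ j ∈ range m, (Real.sin (j * θ) + Real.cos (j * θ))
      + β * (Real.sin (m * θ) + Real.cos (m * θ))) :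
    ∑ j ∈ range m, Real.sin (j * θ) + β * Real.sin (m * θ) = 0 := by
  rw [sum_sub_distrib] at h₀
  rw [sum_add_distrib] at h₁
  linarith

theorem sin_three_term (θ : ℝ) (n : ℕ) :
    Real.sin ((n + 2 : ℕ) * θ) =
      2 * Real.cos θ * Real.sin ((n + 1 : ℕ) * θ) - Real.sin (n * θ) := by
  have e₂ : ((n + 2 : ℕ) : ℝ) * θ = (n + 1 : ℕ) * θ + θ := by push_cast; ring
  have e₀ : (n : ℝ) * θ = (n + 1 : ℕ) * θ - θ := by push_cast; ring
  rw [e₂, e₀, Real.sin_add, Real.sin_sub]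
  ring

theorem sin_add_three (n : ℕ) :
    Real.sin ((n + 3 : ℕ) * (π / 3)) = -Real.sin (n * (π / 3)) := by
  rw [← Real.sin_add_pi]; congr 1; push_cast; ring

theorem sin_add_six (n : ℕ) :
    Real.sin ((n + 6 : ℕ) * (π / 6)) = -Real.sin (n * (π / 6)) := by
  rw [← Real.sin_add_pi]; congr 1; push_cast; ring

/-- if `0 < m < 12` and `α 𝟙 = Σ_{j<m} Q_a^j 𝟙 + β Q_a^m 𝟙` has a real
solution `(α, β)`, then `m = 1` or `m = 11`. -/
theorem gauss_newton_lines_stmt9 (m : ℕ) (hm0 : 0 < m) (hm1 : m < 12)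
    (h : ∃ α β : ℝ,
      (α • fun _ : Fin 2 ⊕ Fin 2 => (1 : ℝ)) =
        (∑ j ∈ Finset.range m, (QaGN ^ j) *ᵥ fun _ => (1 : ℝ)) +
          β • ((QaGN ^ m) *ᵥ fun _ => (1 : ℝ))) :
    m = 1 ∨ m = 11 := by
  obtain ⟨α, β, h⟩ := h
  have coord := fun i => congrFun h i
  simp only [QaGN_pow, Pi.add_apply, Pi.smul_apply, Finset.sum_apply, smul_eq_mul, mul_one] at coord
  have a₀ := coord (Sum.inl 0)
  have a₁ := coord (Sum.inl 1)
  have b₀ := coord (Sum.inr 0)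
  have b₁ := coord (Sum.inr 1)
  simp [Matrix.mulVec, dotProduct, Rot, ← sub_eq_add_neg,
    -Finset.sum_sub_distrib] at a₀ a₁ b₀ b₁
  have A := sum_sin_add_eq_zero a₀ a₁
  have B := sum_sin_add_eq_zero b₀ b₁
  clear h coord a₀ a₁ b₀ b₁
  have s_pos : 1 < √(3 : ℝ) := by
    rw [Real.lt_sqrt] <;> norm_num
  have s_sq : √(3 : ℝ) * √3 = 3 := Real.mul_self_sqrt (by norm_num)
  have p₀ : Real.sin ((0 : ℕ) * (π / 3)) = 0 := by simp
  have p₁ : Real.sin ((1 : ℕ) * (π / 3)) = √3 / 2 := by simp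
  have p₂ : Real.sin ((2 : ℕ) * (π / 3)) = √3 / 2 := by
    rw [sin_three_term (π / 3) 0, p₀, p₁, Real.cos_pi_div_three]; ring
  have q₀ : Real.sin ((0 : ℕ) * (π / 6)) = 0 := by simp
  have q₁ : Real.sin ((1 : ℕ) * (π / 6)) = 1 / 2 := by simp
  have q₂ : Real.sin ((2 : ℕ) * (π / 6)) = √3 / 2 := by
    rw [sin_three_term (π / 6) 0, q₀, q₁, Real.cos_pi_div_six]; ring
  have q₃ : Real.sin ((3 : ℕ) * (π / 6)) = 1 := by
    rw [sin_three_term (π / 6) 1, q₂, q₁, Real.cos_pi_div_six]; linarith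
  have q₄ : Real.sin ((4 : ℕ) * (π / 6)) = √3 / 2 := by
    rw [sin_three_term (π / 6) 2, q₃, q₂, Real.cos_pi_div_six]; ring
  have q₅ : Real.sin ((5 : ℕ) * (π / 6)) = 1 / 2 := by
    rw [sin_three_term (π / 6) 3, q₄, q₃, Real.cos_pi_div_six]; linarith
  by_contra! hm
  -- `A` becomes `√3 / 2 * (a + b * β) = 0` with integers `a`, `b`; when `b ≠ 0`, dividing by `√3`
  -- gives an integer value of `β`, which `B` contradicts because `√3 > 1`.
  -- When `b = 0`, either `A` has `a ≠ 0`, or `m = 6` and `sin (6 * (π / 6)) = 0` removes `β` from `B`.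
  have cancel : ∀ x : ℝ, √3 * x = 0 → x = 0 := fun x hx =>
    (mul_eq_zero.mp hx).resolve_left (by positivity)
  interval_cases m <;>
    simp only [Finset.sum_range_succ, Finset.sum_range_zero, sin_add_three 0, sin_add_three 1,
      sin_add_three 2, sin_add_three 3, sin_add_three 4, sin_add_three 5, sin_add_three 6,
      sin_add_three 7, sin_add_six 0, sin_add_six 1, sin_add_six 2, sin_add_six 3, sin_add_six 4,
      p₀, p₁, p₂, q₀, q₁, q₂, q₃, q₄, q₅] at A B
  · exact absurd rfl hm.1
  · obtain rfl : β = -1 := by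
      have := cancel (β + 1) (by linarith)
      linarith
    linarith
  · linarith
  · obtain rfl : β = 2 := by
      have := cancel (β - 2) (by linarith)
      linarith
    linarith
  · obtain rfl : β = 1 := by
      have := cancel (β - 1) (by linarith)
      linarith
    linarith
  · linarith
  · obtain rfl : β = 0 := by
      have := cancel (β - 0) (by linarith)
      linarith
    linarith
  · obtain rfl : β = -1 := by
      have := cancel (β + 1) (by linarith)
      linarith
    linarith
  · linarith
  · obtain rfl : β = 2 := by
      have := cancel (β - 2) (by linarith)
      linarith
    linarith
  · exact absurd rfl hm.2
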